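/- For every integer m ≥ 1 and every degree d ≥ lm, dim_K (I^{(m)})_d = C(d+2, 2) − (l+1)·C(m+1, 2), where C(n,2) = n(n−1)/2 denotes the binomial coefficient. -/

import Mathlib

open MvPolynomial Filter

/-- The degree-`d` homogeneous component of a homogeneous ideal `J ⊆ K[x,y,z]`,
as a `K`-vector subspace. -/
noncomputable def degComp {K : Type*} [Field K] (J : Ideal (MvPolynomial (Fin 3) K)) (d : ℕ) :
    Submodule K (MvPolynomial (Fin 3) K) :=
  Submodule.restrictScalars K J ⊓ homogeneousSubmodule (Fin 3) K d

/-- `dim_K J_d`. -/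
noncomputable def hdim {K : Type*} [Field K] (J : Ideal (MvPolynomial (Fin 3) K)) (d : ℕ) : ℕ :=
  Module.finrank K (degComp J d)

/-- The subspace `R_1 · J_{d-1}` of products of linear forms with degree-`(d-1)` elements. -/
noncomputable def oneGen {K : Type*} [Field K] (J : Ideal (MvPolynomial (Fin 3) K)) (d : ℕ) :
    Submodule K (MvPolynomial (Fin 3) K) :=
  Submodule.span K
    {x | ∃ f ∈ homogeneousSubmodule (Fin 3) K 1, ∃ g ∈ degComp J (d - 1), x = f * g}

/-- `v_d(J) = dim_K J_d / (R_1 · J_{d-1})`, the number of minimal generators of `J`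
in degree `d`. -/
noncomputable def vnum {K : Type*} [Field K] (J : Ideal (MvPolynomial (Fin 3) K)) (d : ℕ) : ℕ :=
  Module.finrank K
    (↥(degComp J d) ⧸ Submodule.comap (degComp J d).subtype (oneGen J d))


namespace FatPts

/-- Polynomials all of whose monomials have degree at least `m` in the first two variables. -/
noncomputable def J (K : Type*) [Field K] (m : ℕ) : Ideal (MvPolynomial (Fin 3) K) :=
  restrictSupportIdeal (R := K) {s | m ≤ s 0 + s 1}
    (fun a b hab (ha : m ≤ a 0 + a 1) => by
      have h0 := hab 0
      have h1 := hab 1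
      show m ≤ b 0 + b 1
      omega)

variable {K : Type*} [Field K]

lemma mem_J {m : ℕ} {F : MvPolynomial (Fin 3) K} :
    F ∈ J K m ↔ ∀ s, coeff s F ≠ 0 → m ≤ s 0 + s 1 := by
  constructor
  · intro h s hs
    exact h (mem_support_iff.2 hs)
  · intro h s hs
    exact h s (mem_support_iff.1 hs)

lemma J_mul {a b : ℕ} {F G : MvPolynomial (Fin 3) K} (hF : F ∈ J K a) (hG : G ∈ J K b) :
    F * G ∈ J K (a + b) := by
  rw [mem_J] at *
  intro s hs
  rw [coeff_mul] at hs
  obtain ⟨⟨i, j⟩, hij, e⟩ := Finset.exists_ne_zero_of_sum_ne_zero hs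
  rw [Finset.HasAntidiagonal.mem_antidiagonal] at hij
  have h1 := hF i (left_ne_zero_of_mul e)
  have h2 := hG j (right_ne_zero_of_mul e)
  simp only at hij
  subst hij
  simp only [Finsupp.add_apply]
  omega

lemma J_pow (m : ℕ) : J K 1 ^ m = J K m := by
  apply le_antisymm
  · induction m with
    | zero =>
      intro F _
      rw [mem_J]
      intro s _
      omega
    | succ n ih =>
      rw [pow_succ, Ideal.mul_le]
      intro r hr s hs
      exact J_mul (ih hr) hs
  · intro F hF
    rw [F.as_sum]
    refine Ideal.sum_mem _ fun s hs => ?_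
    have h := mem_J.1 hF s (mem_support_iff.1 hs)
    apply Ideal.pow_le_pow_right h
    have hX : ∀ i : Fin 3, i ≠ 2 → (X i : MvPolynomial (Fin 3) K) ∈ J K 1 := by
      intro i hi
      rw [mem_J]
      intro t ht
      rw [coeff_X] at ht
      have : Finsupp.single i 1 = t := by
        by_contra hne
        simp [hne] at ht
      subst this
      fin_cases i <;> simp_all
    rw [monomial_eq, Finsupp.prod_fintype _ _ (by simp), Fin.prod_univ_three]
    apply Ideal.mul_mem_left
    apply Ideal.mul_mem_right
    rw [pow_add]
    exact Ideal.mul_mem_mul (Ideal.pow_mem_pow (hX 0 (by decide)) _)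
      (Ideal.pow_mem_pow (hX 1 (by decide)) _)

lemma J_X {k e : ℕ} {g : MvPolynomial (Fin 3) K} (h : X 2 ^ e * g ∈ J K k) : g ∈ J K k := by
  rw [mem_J] at *
  intro s hs
  have := h (Finsupp.single 2 e + s) (by
    rw [X_pow_eq_monomial, coeff_monomial_mul]
    simpa using hs)
  simpa using this

lemma J_one_hom {e : ℕ} {A : MvPolynomial (Fin 3) K} (hA : A.IsHomogeneous e) :
    A - C (coeff (Finsupp.single 2 e) A) * X 2 ^ e ∈ J K 1 := by
  rw [mem_J]
  intro s hs
  by_contra hlt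
  apply hs
  have hs0 : s 0 = 0 := by omega
  have hs1 : s 1 = 0 := by omega
  have hs2 : s = Finsupp.single 2 (s 2) := by
    ext i
    fin_cases i <;> simp [hs0, hs1]
  rw [coeff_sub, coeff_C_mul, coeff_X_pow]
  by_cases h : s 2 = e
  · rw [hs2, h]; simp
  · have h2 : Finsupp.single (2 : Fin 3) e ≠ s := by
      intro h'
      apply h
      rw [← h']
      simp
    rw [if_neg h2, hA.coeff_eq_zero]
    · simp
    · rw [hs2]; simpa using h

lemma J_primary {e k : ℕ} {A g : MvPolynomial (Fin 3) K} (hA : A.IsHomogeneous e)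
    (hA1 : A ∉ J K 1) (h : A * g ∈ J K k) : g ∈ J K k := by
  set c := coeff (Finsupp.single 2 e) A with hc
  have hN := J_one_hom hA
  rw [← hc] at hN
  have hc0 : c ≠ 0 := by
    intro h0
    rw [h0] at hN
    simp at hN
    exact hA1 hN
  have key : ∀ j ≤ k, g ∈ J K j := by
    intro j
    induction j with
    | zero => intro _; rw [mem_J]; intros; omega
    | succ j ih =>
      intro hj
      have h1 := J_mul hN (ih (by omega))
      have h2 : A * g ∈ J K (1 + j) := by
        rw [mem_J] at h ⊢
        intro s hs
        have := h s hs
        omega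
      have h3 := Ideal.sub_mem _ h2 h1
      have h4 : X 2 ^ e * g ∈ J K (1 + j) := by
        have h5 := Ideal.mul_mem_left _ (C c⁻¹) h3
        have h6 : (C c⁻¹ : MvPolynomial (Fin 3) K) * C c = 1 := by
          rw [← C_mul, inv_mul_cancel₀ hc0, C_1]
        have h7 : C c⁻¹ * (A * g - (A - C c * X 2 ^ e) * g) = X 2 ^ e * g := by
          linear_combination (X 2 ^ e * g) * h6
        rwa [h7] at h5
      rw [add_comm]
      exact J_X h4
  exact key k le_rfl

lemma J_one_iff (F : MvPolynomial (Fin 3) K) :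
    F ∈ J K 1 ↔ ∀ n, eval (Pi.single 2 1) (homogeneousComponent n F) = 0 := by
  have key : ∀ n, eval (Pi.single 2 1) (homogeneousComponent n F)
      = coeff (Finsupp.single 2 n) F := by
    intro n
    have hh := homogeneousComponent_isHomogeneous n F
    have h1 := J_one_hom hh
    set G := homogeneousComponent n F
    have h2 : ∀ N ∈ J K 1, eval (Pi.single 2 1) N = 0 := by
      intro N hN
      rw [eval_eq']
      refine Finset.sum_eq_zero fun s hs => ?_
      have := mem_J.1 hN s (mem_support_iff.1 hs)
      rw [Fin.prod_univ_three]
      have h01 : s 0 ≠ 0 ∨ s 1 ≠ 0 := by omega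
      rcases h01 with h | h <;> simp [h]
    have h3 := h2 _ h1
    simp [sub_eq_zero] at h3
    rw [h3, coeff_homogeneousComponent]
    simp
  simp only [key]
  rw [mem_J]
  constructor
  · intro h n
    by_contra hn
    have := h _ hn
    simp at this
  · intro h s hs
    by_contra hlt
    apply hs
    have hs0 : s 0 = 0 := by omega
    have hs1 : s 1 = 0 := by omega
    have hs2 : s = Finsupp.single 2 (s 2) := by
      ext i
      fin_cases i <;> simp [hs0, hs1]
    rw [hs2]
    exact h _

/-! Counting -/

lemma card_T (d m : ℕ) (h : m ≤ d + 1) :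
    Nat.card {s : Fin 3 →₀ ℕ | s.degree = d ∧ s 0 + s 1 < m} = (m + 1).choose 2 := by
  have e : {s : Fin 3 →₀ ℕ | s.degree = d ∧ s 0 + s 1 < m} ≃
      (Finset.range m).sigma (fun k => Finset.range (k + 1)) :=
    { toFun := fun s => ⟨⟨s.1 0 + s.1 1, s.1 0⟩, by
        have := s.2.2
        simp; omega⟩
      invFun := fun t => ⟨Finsupp.equivFunOnFinite.symm ![t.1.2, t.1.1 - t.1.2, d - t.1.1], by
        have h1 := Finset.mem_sigma.1 t.2
        rw [Finset.mem_range, Finset.mem_range] at h1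
        simp [Finsupp.degree_eq_sum, Fin.sum_univ_three]
        omega⟩
      left_inv := by
        rintro ⟨s, hs, hs'⟩
        rw [Finsupp.degree_eq_sum, Fin.sum_univ_three] at hs
        ext i
        fin_cases i <;> simp <;> omega
      right_inv := by
        rintro ⟨⟨a, b⟩, ht⟩
        simp at ht
        simp
        omega }
  rw [Nat.card_congr e]
  rw [Nat.card_eq_fintype_card, Fintype.card_coe, Finset.card_sigma]
  simp only [Finset.card_range]
  rw [Nat.choose_two_right]
  have := Finset.sum_range_id_mul_two (m+1)
  rw [Finset.sum_range_succ'] at this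
  simp at this
  simp
  omega

lemma degComp_J (m d : ℕ) : degComp (J K m) d =
    restrictSupport K {s | s.degree = d ∧ m ≤ s 0 + s 1} := by
  ext F
  rw [mem_restrictSupport_iff]
  rw [degComp, Submodule.mem_inf, Submodule.restrictScalars_mem, mem_J, mem_homogeneousSubmodule]
  constructor
  · rintro ⟨h1, h2⟩ s hs
    have hs := mem_support_iff.1 hs
    refine ⟨?_, h1 s hs⟩
    by_contra hne
    exact hs (h2.coeff_eq_zero hne)
  · intro h
    refine ⟨fun s hs => (h (mem_support_iff.2 hs)).2, ?_⟩
    have : F ∈ homogeneousSubmodule (Fin 3) K d := by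
      rw [homogeneousSubmodule_eq_finsupp_supported]
      intro s hs
      exact (h hs).1
    exact this

lemma finite_deg (d : ℕ) : {s : Fin 3 →₀ ℕ | s.degree = d}.Finite := by
  have h := card_T d (d+1) le_rfl
  have : {s : Fin 3 →₀ ℕ | s.degree = d} = {s : Fin 3 →₀ ℕ | s.degree = d ∧ s 0 + s 1 < d + 1} := by
    ext s
    simp [Finsupp.degree_eq_sum, Fin.sum_univ_three]
    omega
  rw [this]
  apply Set.finite_of_ncard_pos
  rw [← Nat.card_coe_set_eq, h]
  exact Nat.choose_pos (by omega)

lemma finrank_J (m d : ℕ) (h : m ≤ d + 1) :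
    Module.finrank K (degComp (J K m) d) + (m + 1).choose 2 = (d + 2).choose 2 := by
  rw [degComp_J, Module.finrank_eq_nat_card_basis (basisRestrictSupport K _), ← card_T d m h,
    ← card_T d (d + 1) le_rfl, Nat.card_coe_set_eq, Nat.card_coe_set_eq, Nat.card_coe_set_eq,
    ← Set.ncard_union_eq ?_ ((finite_deg d).subset fun s hs => hs.1)
      ((finite_deg d).subset fun s hs => hs.1)]
  · congr 1
    ext s
    simp [Finsupp.degree_eq_sum, Fin.sum_univ_three]
    omega
  · rw [Set.disjoint_left]
    rintro s ⟨_, h1⟩ ⟨_, h2⟩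
    omega

instance (I : Ideal (MvPolynomial (Fin 3) K)) (d : ℕ) : FiniteDimensional K (degComp I d) := by
  have : FiniteDimensional K (homogeneousSubmodule (Fin 3) K d) :=
    Module.Finite.iff_fg.2 (homogeneousSubmodule_fg _ _ d)
  exact Submodule.finiteDimensional_of_le (inf_le_right)

/-! Change of coordinates -/

/-- Linear substitution. -/
noncomputable def subst (e : (Fin 3 → K) ≃ₗ[K] (Fin 3 → K)) :
    MvPolynomial (Fin 3) K →ₐ[K] MvPolynomial (Fin 3) K :=
  aeval (fun i => ∑ j, C (e (Pi.single j 1) i) * X j)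

lemma eval_subst (e : (Fin 3 → K) ≃ₗ[K] (Fin 3 → K)) (v : Fin 3 → K)
    (F : MvPolynomial (Fin 3) K) : eval v (subst e F) = eval (e v) F := by
  induction F using MvPolynomial.induction_on with
  | C a => simp [subst]
  | add p q hp hq => simp [hp, hq]
  | mul_X p i hp =>
    rw [map_mul, map_mul, hp, map_mul]
    congr 1
    conv_rhs => rw [← Finset.univ_sum_single v]
    simp only [subst, aeval_X, map_sum, map_mul, eval_C, eval_X, Finset.sum_apply]
    refine Finset.sum_congr rfl fun j _ => ?_
    have : (Pi.single j (v j) : Fin 3 → K) = v j • Pi.single j 1 := by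
      rw [← Pi.single_smul]; simp
    rw [this, map_smul]
    simp [mul_comm]

lemma subst_hom (e : (Fin 3 → K) ≃ₗ[K] (Fin 3 → K)) {d : ℕ}
    {F : MvPolynomial (Fin 3) K} (h : F.IsHomogeneous d) : (subst e F).IsHomogeneous d := by
  have := h.aeval (fun i => ∑ j, C (e (Pi.single j 1) i) * X j) (n := 1) (fun i =>
    IsHomogeneous.sum _ _ _ fun j _ => isHomogeneous_C_mul_X _ _)
  rwa [one_mul] at this

variable [CharZero K]

/-- Linear substitution as an equivalence. -/
noncomputable def substE (e : (Fin 3 → K) ≃ₗ[K] (Fin 3 → K)) :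
    MvPolynomial (Fin 3) K ≃ₐ[K] MvPolynomial (Fin 3) K :=
  AlgEquiv.ofAlgHom (subst e) (subst e.symm)
    (AlgHom.ext fun F => MvPolynomial.funext fun v => by simp [eval_subst])
    (AlgHom.ext fun F => MvPolynomial.funext fun v => by simp [eval_subst])

lemma hc_subst (e : (Fin 3 → K) ≃ₗ[K] (Fin 3 → K)) (n : ℕ) (F : MvPolynomial (Fin 3) K) :
    homogeneousComponent n (subst e F) = subst e (homogeneousComponent n F) := by
  conv_lhs => rw [← sum_homogeneousComponent F]
  simp only [map_sum]
  have : ∀ i ∈ Finset.range (F.totalDegree + 1),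
      homogeneousComponent n (subst e (homogeneousComponent i F)) =
      if n = i then subst e (homogeneousComponent i F) else 0 := fun i _ =>
    homogeneousComponent_of_mem (subst_hom e (homogeneousComponent_isHomogeneous i F))
  rw [Finset.sum_congr rfl this, Finset.sum_ite_eq]
  split_ifs with h
  · rfl
  · rw [homogeneousComponent_eq_zero, map_zero]
    simpa using h

lemma exists_equiv {p : Fin 3 → K} (hp : p ≠ 0) :
    ∃ e : (Fin 3 → K) ≃ₗ[K] (Fin 3 → K), e (Pi.single 2 1) = p := by
  have h0 : (Pi.single 2 1 : Fin 3 → K) ≠ 0 := by simp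
  let f := (LinearEquiv.toSpanNonzeroSingleton K _ _ h0).symm ≪≫ₗ
    (LinearEquiv.toSpanNonzeroSingleton K _ _ hp)
  obtain ⟨g, hg⟩ := Submodule.exists_linearEquiv_restrict_eq f
  refine ⟨g, ?_⟩
  have := hg ⟨_, Submodule.mem_span_singleton_self _⟩
  have h1 : f ⟨_, Submodule.mem_span_singleton_self _⟩ =
      ⟨p, Submodule.mem_span_singleton_self _⟩ := by
    simp only [f, LinearEquiv.trans_apply]
    have h2 : (LinearEquiv.toSpanNonzeroSingleton K _ _ h0).symm
        ⟨_, Submodule.mem_span_singleton_self _⟩ = 1 := by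
      rw [LinearEquiv.symm_apply_eq, LinearEquiv.toSpanNonzeroSingleton_one]
    rw [h2, LinearEquiv.toSpanNonzeroSingleton_one]
  rw [h1] at this
  exact this.symm

lemma exists_coord {p : Fin 3 → K} (hp : p ≠ 0) {P : Ideal (MvPolynomial (Fin 3) K)}
    (hP : ∀ F, F ∈ P ↔ ∀ n, eval p (homogeneousComponent n F) = 0) :
    ∃ φ : MvPolynomial (Fin 3) K ≃ₐ[K] MvPolynomial (Fin 3) K,
      (∀ F d, F.IsHomogeneous d ↔ (φ F).IsHomogeneous d) ∧
      ∀ m F, F ∈ P ^ m ↔ φ F ∈ J K m := by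
  obtain ⟨e, he⟩ := exists_equiv hp
  refine ⟨substE e, fun F d => ⟨subst_hom e, fun h => ?_⟩, ?_⟩
  · have := subst_hom e.symm h
    convert this
    exact ((substE e).symm_apply_apply F).symm
  · have h1 : ∀ F, F ∈ P ↔ substE e F ∈ J K 1 := by
      intro F
      rw [hP, J_one_iff]
      have : substE e F = subst e F := rfl
      simp only [this, hc_subst, eval_subst, he]
    have h2 : P.map (substE e) = J K 1 := by
      ext F
      rw [Ideal.mem_map_of_equiv]
      constructor
      · rintro ⟨x, hx, rfl⟩
        exact (h1 x).1 hx
      · intro h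
        refine ⟨(substE e).symm F, ?_, by simp⟩
        rw [h1]
        simpa using h
    intro m F
    rw [← J_pow, ← h2, ← Ideal.map_pow, Ideal.mem_map_of_equiv]
    simp

lemma finrank_P {p : Fin 3 → K} (hp : p ≠ 0) {P : Ideal (MvPolynomial (Fin 3) K)}
    (hP : ∀ F, F ∈ P ↔ ∀ n, eval p (homogeneousComponent n F) = 0) (m d : ℕ) (h : m ≤ d + 1) :
    Module.finrank K (degComp (P ^ m) d) + (m + 1).choose 2 = (d + 2).choose 2 := by
  obtain ⟨φ, h1, h2⟩ := exists_coord hp hP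
  rw [← finrank_J (K := K) m d h, ← LinearEquiv.finrank_map_eq φ.toLinearEquiv]
  have : (degComp (P ^ m) d).map φ.toLinearEquiv.toLinearMap = degComp (J K m) d := by
    ext F
    simp only [degComp, Submodule.mem_map, Submodule.mem_inf, Submodule.restrictScalars_mem,
      mem_homogeneousSubmodule]
    constructor
    · rintro ⟨x, ⟨hx, hx'⟩, rfl⟩
      exact ⟨(h2 m x).1 hx, (h1 x d).1 hx'⟩
    · rintro ⟨hx, hx'⟩
      refine ⟨φ.symm F, ⟨?_, ?_⟩, by simp⟩
      · rw [h2]; simpa using hx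
      · rw [h1]; simpa using hx'
  rw [← this]

lemma P_primary {p : Fin 3 → K} (hp : p ≠ 0) {P : Ideal (MvPolynomial (Fin 3) K)}
    (hP : ∀ F, F ∈ P ↔ ∀ n, eval p (homogeneousComponent n F) = 0) {e k : ℕ}
    {A g : MvPolynomial (Fin 3) K} (hA : A.IsHomogeneous e)
    (hA1 : A ∉ P) (h : A * g ∈ P ^ k) : g ∈ P ^ k := by
  obtain ⟨φ, h1, h2⟩ := exists_coord hp hP
  rw [h2] at h ⊢
  rw [map_mul] at h
  refine J_primary ((h1 A e).1 hA) ?_ h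
  intro h'
  apply hA1
  rw [← h2, pow_one] at h'
  exact h'

lemma mem_P_hom {p : Fin 3 → K} {P : Ideal (MvPolynomial (Fin 3) K)}
    (hP : ∀ F, F ∈ P ↔ ∀ n, eval p (homogeneousComponent n F) = 0) {e : ℕ}
    {A : MvPolynomial (Fin 3) K} (hA : A.IsHomogeneous e) : A ∈ P ↔ eval p A = 0 := by
  rw [hP]
  constructor
  · intro h
    rw [← homogeneousComponent_eq_self hA]
    exact h e
  · intro h n
    rw [homogeneousComponent_of_mem hA]
    split_ifs <;> simp [h]

lemma finrank_top (d : ℕ) :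
    Module.finrank K (degComp (⊤ : Ideal (MvPolynomial (Fin 3) K)) d) = (d + 2).choose 2 := by
  have := finrank_J (K := K) 0 d (by omega)
  have h : J K 0 = ⊤ := by
    rw [eq_top_iff]
    intro F _
    rw [mem_J]
    intros
    omega
  rw [h] at this
  simpa using this

/-- Multiplication by a separating form. -/
lemma sup_eq {p : Fin 3 → K} (hp : p ≠ 0) {P : Ideal (MvPolynomial (Fin 3) K)}
    (hP : ∀ F, F ∈ P ↔ ∀ n, eval p (homogeneousComponent n F) = 0) {e m d : ℕ}
    {A : MvPolynomial (Fin 3) K} (hA : A.IsHomogeneous e) (hA0 : eval p A ≠ 0)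
    (hd : e + m ≤ d + 1) (hed : e ≤ d) (Q : Ideal (MvPolynomial (Fin 3) K)) (hQ : A ∈ Q) :
    degComp Q d ⊔ degComp (P ^ m) d = degComp ⊤ d := by
  have hA' : A ≠ 0 := by rintro rfl; simp at hA0
  have hmono : ∀ I : Ideal (MvPolynomial (Fin 3) K), degComp I d ≤ degComp ⊤ d := fun I F hF =>
    ⟨trivial, hF.2⟩
  let μ : MvPolynomial (Fin 3) K →ₗ[K] MvPolynomial (Fin 3) K := LinearMap.mulLeft K A
  have hμ : Function.Injective μ := fun a b hab => mul_left_cancel₀ hA' hab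
  have hmap : ∀ I : Ideal (MvPolynomial (Fin 3) K),
      Module.finrank K ((degComp I (d - e)).map μ) = Module.finrank K (degComp I (d - e)) := fun I =>
    (LinearEquiv.finrank_eq (Submodule.equivMapOfInjective μ hμ _)).symm
  set U := (degComp (⊤ : Ideal (MvPolynomial (Fin 3) K)) (d - e)).map μ with hU
  have hUQ : U ≤ degComp Q d := by
    rintro _ ⟨g, hg, rfl⟩
    refine ⟨Ideal.mul_mem_right _ _ hQ, ?_⟩
    have := hA.mul hg.2
    rwa [Nat.add_sub_cancel' hed] at this
  have hinf : U ⊓ degComp (P ^ m) d = (degComp (P ^ m) (d - e)).map μ := by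
    ext F
    constructor
    · rintro ⟨⟨g, hg, rfl⟩, hF⟩
      refine ⟨g, ⟨?_, hg.2⟩, rfl⟩
      refine P_primary hp hP hA ?_ hF.1
      rwa [mem_P_hom hP hA]
    · rintro ⟨g, hg, rfl⟩
      refine ⟨⟨g, ⟨trivial, hg.2⟩, rfl⟩, Ideal.mul_mem_left _ _ hg.1, ?_⟩
      have := hA.mul hg.2
      rwa [Nat.add_sub_cancel' hed] at this
  have hUd : U ⊔ degComp (P ^ m) d = degComp ⊤ d := by
    apply Submodule.eq_of_le_of_finrank_eq
    · exact sup_le (hUQ.trans (hmono _)) (hmono _)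
    · have h1 := Submodule.finrank_sup_add_finrank_inf_eq U (degComp (P ^ m) d)
      rw [hinf, hmap, hU, hmap, finrank_top, ← hU] at h1
      rw [finrank_top]
      have h2 := finrank_P hp hP m d (by omega)
      have h3 := finrank_P hp hP m (d - e) (by omega)
      omega
  apply le_antisymm (sup_le (hmono _) (hmono _))
  rw [← hUd]
  exact sup_le_sup_right hUQ _

lemma main {n : ℕ} (p : Fin n → Fin 3 → K) (hp0 : ∀ i, p i ≠ 0)
    (P : Fin n → Ideal (MvPolynomial (Fin 3) K))
    (hP : ∀ i F, F ∈ P i ↔ ∀ n, eval (p i) (homogeneousComponent n F) = 0)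
    (m d : ℕ) (A : Fin n → MvPolynomial (Fin 3) K) (e : Fin n → ℕ)
    (hA : ∀ i, (A i).IsHomogeneous (e i)) (hA0 : ∀ i, eval (p i) (A i) ≠ 0)
    (hAP : ∀ i j, i ≠ j → A i ∈ P j ^ m) (hd : ∀ i, e i + m ≤ d + 1) (hed : ∀ i, e i ≤ d)
    (S : Finset (Fin n)) :
    Module.finrank K (degComp (⨅ i ∈ S, P i ^ m) d) + S.card * (m + 1).choose 2
      = (d + 2).choose 2 := by
  induction S using Finset.induction_on with
  | empty =>
    have h : (⨅ i ∈ (∅ : Finset (Fin n)), P i ^ m) = ⊤ := by simp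
    rw [h, finrank_top]
    simp
  | insert i S hi ih =>
    rw [Finset.iInf_insert, Finset.card_insert_of_notMem hi]
    have h1 := sup_eq (hp0 i) (hP i) (hA i) (hA0 i) (hd i) (hed i) (⨅ i ∈ S, P i ^ m) (by
      simp only [Submodule.mem_iInf]
      intro j hj
      exact hAP i j (by rintro rfl; exact hi hj))
    have h2 := Submodule.finrank_sup_add_finrank_inf_eq (degComp (⨅ i ∈ S, P i ^ m) d)
      (degComp (P i ^ m) d)
    rw [h1, finrank_top] at h2
    have h3 : degComp (⨅ i ∈ S, P i ^ m) d ⊓ degComp (P i ^ m) d =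
        degComp (P i ^ m ⊓ ⨅ i ∈ S, P i ^ m) d := by
      ext F
      constructor
      · rintro ⟨a, b⟩
        exact ⟨⟨b.1, a.1⟩, a.2⟩
      · rintro ⟨⟨a, b⟩, c⟩
        exact ⟨⟨b, c⟩, ⟨a, c⟩⟩
    rw [h3] at h2
    have h4 := finrank_P (hp0 i) (hP i) m d (by have := hd i; omega)
    rw [add_mul, one_mul]
    omega

/-- Linear form with given coefficients. -/
noncomputable def lin (v : Fin 3 → K) : MvPolynomial (Fin 3) K := ∑ j, C (v j) * X j

lemma lin_hom (v : Fin 3 → K) : (lin v).IsHomogeneous 1 :=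
  IsHomogeneous.sum _ _ _ fun j _ => isHomogeneous_C_mul_X _ _

lemma eval_lin (v p : Fin 3 → K) : eval p (lin v) = ∑ j, v j * p j := by
  simp [lin]

end FatPts

theorem stmt_1
    (K : Type*) [Field K] [CharZero K]
    -- `l > 2` points on a line plus one point off the line
    (l : ℕ) (hl : 2 < l)
    (p : Fin (l + 1) → Fin 3 → K) (hp0 : ∀ i, p i ≠ 0)
    (hdist : ∀ i j, i ≠ j → ∀ c : K, c • p i ≠ p j)
    (L : Fin 3 → K) (hL : L ≠ 0)
    (hon : ∀ i : Fin (l + 1), (i : ℕ) < l → ∑ j, L j * p i j = 0)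
    (hoff : ∑ j, L j * p (Fin.last l) j ≠ 0)
    -- `P i` is the homogeneous prime ideal of all forms vanishing at `p i`
    (P : Fin (l + 1) → Ideal (MvPolynomial (Fin 3) K))
    (hP : ∀ i F, F ∈ P i ↔ ∀ n, eval (p i) (homogeneousComponent n F) = 0)
    -- the uniform fat point ideal `I^{(m)} = P_1^m ∩ ⋯ ∩ P_{l+1}^m`
    (m : ℕ) (hm : 1 ≤ m)
    (Im : Ideal (MvPolynomial (Fin 3) K)) (hIm : Im = ⨅ i, P i ^ m) :
    ∀ d : ℕ, l * m ≤ d →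
      (hdim Im d : ℤ) = (d + 2).choose 2 - (l + 1) * (m + 1).choose 2 := by
  intro d hd
  have hlt : ∀ i : Fin (l + 1), i ≠ Fin.last l → (i : ℕ) < l := fun i hi =>
    Fin.val_lt_last hi
  have hsep : ∀ i j : Fin (l + 1), ∃ v : Fin 3 → K, i ≠ Fin.last l → j ≠ Fin.last l → i ≠ j →
      (∑ k, v k * p i k ≠ 0 ∧ ∑ k, v k * p j k = 0 ∧ ∑ k, v k * p (Fin.last l) k = 0) := by
    intro i j
    by_cases h : i ≠ Fin.last l ∧ j ≠ Fin.last l ∧ i ≠ j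
    · obtain ⟨hi, hj, hij⟩ := h
      have hn : p i ∉ Submodule.span K {p j, p (Fin.last l)} := by
        rw [Submodule.mem_span_pair]
        rintro ⟨a, b, hab⟩
        have h1 := hon i (hlt i hi)
        have h2 := hon j (hlt j hj)
        have hb : b = 0 := by
          have h3 : b * ∑ k, L k * p (Fin.last l) k = 0 := by
            rw [← hab] at h1
            simp only [Fin.sum_univ_three, Pi.add_apply, Pi.smul_apply, smul_eq_mul] at h1 h2 ⊢
            linear_combination h1 - a * h2
          exact (mul_eq_zero.1 h3).resolve_right hoff
        rw [hb, zero_smul, add_zero] at hab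
        exact hdist j i hij.symm a hab
      obtain ⟨f, hf, hk⟩ := Submodule.exists_le_ker_of_notMem hn
      have hfv : ∀ w, f w = ∑ k, f (Pi.single k 1) * w k := by
        intro w
        conv_lhs => rw [← Finset.univ_sum_single w]
        rw [map_sum]
        refine Finset.sum_congr rfl fun k _ => ?_
        have : (Pi.single k (w k) : Fin 3 → K) = w k • Pi.single k 1 := by
          rw [← Pi.single_smul]; simp
        rw [this, map_smul, smul_eq_mul, mul_comm]
      refine ⟨fun k => f (Pi.single k 1), fun _ _ _ => ?_⟩
      rw [← hfv, ← hfv, ← hfv]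
      exact ⟨hf, hk (Submodule.subset_span (by simp)), hk (Submodule.subset_span (by simp))⟩
    · exact ⟨0, fun a b c => absurd ⟨a, b, c⟩ h⟩
  choose v hv using hsep
  let T : Fin (l + 1) → Finset (Fin (l + 1)) := fun i => (Finset.univ.erase (Fin.last l)).erase i
  let A : Fin (l + 1) → MvPolynomial (Fin 3) K := fun i =>
    if i = Fin.last l then FatPts.lin L ^ m else ∏ j ∈ T i, FatPts.lin (v i j) ^ m
  let e : Fin (l + 1) → ℕ := fun i => if i = Fin.last l then m else (l - 1) * m
  have hlm : (l - 1) * m + m = l * m := by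
    obtain ⟨k, rfl⟩ : ∃ k, l = k + 1 := ⟨l - 1, by omega⟩
    simp [add_mul]
  have hlm2 : 2 * m ≤ l * m := Nat.mul_le_mul_right _ (by omega)
  have hmem : ∀ j w, ∑ k, w k * p j k = 0 → FatPts.lin w ^ m ∈ P j ^ m := by
    intro j w h
    apply Ideal.pow_mem_pow
    rw [FatPts.mem_P_hom (hP j) (FatPts.lin_hom w), FatPts.eval_lin, h]
  have key := FatPts.main p hp0 P hP m d A e ?_ ?_ ?_ ?_ ?_ Finset.univ
  · have h1 : (⨅ i ∈ (Finset.univ : Finset (Fin (l + 1))), P i ^ m) = Im := by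
      rw [hIm]; simp
    rw [h1, Finset.card_univ, Fintype.card_fin] at key
    rw [hdim, ← key]
    push_cast
    ring
  · intro i
    by_cases hi : i = Fin.last l
    · simp only [A, e, hi, if_true]
      simpa using (FatPts.lin_hom L).pow m
    · simp only [A, e, hi, if_false]
      have := IsHomogeneous.prod (T i) (fun j => FatPts.lin (v i j) ^ m) (fun _ => m)
        (fun j _ => by simpa using (FatPts.lin_hom (v i j)).pow m)
      have hc : (T i).card = l - 1 := by
        simp [T, Finset.card_erase_of_mem, hi]
      rwa [Finset.sum_const, hc, smul_eq_mul] at this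
  · intro i
    by_cases hi : i = Fin.last l
    · simp only [A, hi, if_true, map_pow, FatPts.eval_lin]
      exact pow_ne_zero _ hoff
    · simp only [A, hi, if_false, map_prod, map_pow, FatPts.eval_lin]
      rw [Finset.prod_ne_zero_iff]
      intro j hj
      simp only [T, Finset.mem_erase] at hj
      exact pow_ne_zero _ (hv i j hi hj.2.1 (Ne.symm hj.1)).1
  · intro i j hij
    by_cases hi : i = Fin.last l
    · simp only [A, hi, if_true]
      exact hmem _ _ (hon j (hlt j (by rintro rfl; exact hij hi)))
    · simp only [A, hi, if_false]
      have hT : ∀ k ∈ T i, FatPts.lin (v i k) ^ m ∈ P j ^ m →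
          ∏ j ∈ T i, FatPts.lin (v i j) ^ m ∈ P j ^ m := fun k hk h =>
        Ideal.mem_of_dvd _ (Finset.dvd_prod_of_mem _ hk) h
      by_cases hj : j = Fin.last l
      · have hne : (T i).Nonempty := by
          rw [← Finset.card_pos]
          have hc : (T i).card = l - 1 := by
            simp [T, Finset.card_erase_of_mem, hi]
          omega
        obtain ⟨k, hk⟩ := hne
        refine hT k hk (hmem _ _ ?_)
        simp only [T, Finset.mem_erase] at hk
        rw [hj]
        exact (hv i k hi hk.2.1 (Ne.symm hk.1)).2.2
      · refine hT j ?_ (hmem _ _ (hv i j hi hj hij).2.1)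
        simp [T, hj, Ne.symm hij]
  · intro i
    simp only [e]
    split_ifs <;> omega
  · intro i
    simp only [e]
    split_ifs <;> omega
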